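/- arXiv:quant-ph/0512012 — 4 statements merged into one kernel-verified Lean document; each statement's English description precedes it below -/
import Mathlib

section
/- Let d ≥ 2 and 1 ≤ n < d. Then the matrix K = Z + (d(n−1)/(d−n)) · P_+ on ℂ^d ⊗ ℂ^d has Schmidt number at most n. -/
open Matrix BigOperators Kronecker ComplexOrder

/-- The d×d matrix `M_v` associated with a vector `v` on ℂ^d ⊗ ℂ^d, `(M_v)_{ij} = v (i,j)`. -/
def toMat (d : ℕ) (v : Fin d × Fin d → ℂ) : Matrix (Fin d) (Fin d) ℂ :=
  Matrix.of fun i j => v (i, j)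

/-- `ρ` has Schmidt number at most `n`: it is a finite sum of `w wᴴ` with each `w` of
Schmidt rank (i.e. rank of the associated d×d matrix) at most `n`. -/
def SchmidtNumberLE (d : ℕ) (ρ : Matrix (Fin d × Fin d) (Fin d × Fin d) ℂ) (n : ℕ) : Prop :=
  ∃ (k : ℕ) (w : Fin k → (Fin d × Fin d → ℂ)),
    (∀ i, (toMat d (w i)).rank ≤ n) ∧
    ρ = ∑ i, Matrix.vecMulVec (w i) (star (w i))

/-- The maximally entangled unit vector `ψ₊ = (1/√d) Σ_i |ii⟩`. -/
noncomputable def psiPlus (d : ℕ) : Fin d × Fin d → ℂ :=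
  fun p => if p.1 = p.2 then (((Real.sqrt d)⁻¹ : ℝ) : ℂ) else 0

/-- `P₊ = ψ₊ ψ₊ᴴ`. -/
noncomputable def Pplus (d : ℕ) : Matrix (Fin d × Fin d) (Fin d × Fin d) ℂ :=
  Matrix.vecMulVec (psiPlus d) (star (psiPlus d))

/-- `Z = Σ_i |ii⟩⟨ii|`. -/
noncomputable def Zmat (d : ℕ) : Matrix (Fin d × Fin d) (Fin d × Fin d) ℂ :=
  Matrix.diagonal (fun p => if p.1 = p.2 then (1 : ℂ) else 0)

/-!
Summing the rank-one operators `φ_S φ_Sᴴ` of the vectors `φ_S = Σ_{i ∈ S} |ii⟩`, each of Schmidt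
rank `n`, over all `n`-element subsets `S` of the index set gives a matrix supported on the span of
the `|ii⟩` and invariant under permutations of the indices, hence a combination of `Z` and `P₊`. The
coefficients count the `n`-subsets through one or two given points, and `K` turns out to be a
positive multiple of this sum.
-/

section SchmidtCone

variable {d n : ℕ} {ρ σ : Matrix (Fin d × Fin d) (Fin d × Fin d) ℂ}

theorem schmidtNumberLE_zero : SchmidtNumberLE d 0 n :=
  ⟨0, ![], fun i => i.elim0, by simp⟩

theorem schmidtNumberLE_vecMulVec_star {v : Fin d × Fin d → ℂ} (hv : (toMat d v).rank ≤ n) :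
    SchmidtNumberLE d (vecMulVec v (star v)) n :=
  ⟨1, fun _ => v, fun _ => hv, by simp⟩

theorem SchmidtNumberLE.add (hρ : SchmidtNumberLE d ρ n) (hσ : SchmidtNumberLE d σ n) :
    SchmidtNumberLE d (ρ + σ) n := by
  obtain ⟨k, v, hv, rfl⟩ := hρ
  obtain ⟨l, w, hw, rfl⟩ := hσ
  refine ⟨k + l, Fin.append v w, fun i => ?_, ?_⟩
  · refine Fin.addCases (fun i => ?_) (fun i => ?_) i
    · simpa only [Fin.append_left] using hv i
    · simpa only [Fin.append_right] using hw i
  · simp only [Fin.sum_univ_add, Fin.append_left, Fin.append_right]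

theorem SchmidtNumberLE.sum {ι : Type*} {s : Finset ι}
    {ρ : ι → Matrix (Fin d × Fin d) (Fin d × Fin d) ℂ}
    (hρ : ∀ i ∈ s, SchmidtNumberLE d (ρ i) n) : SchmidtNumberLE d (∑ i ∈ s, ρ i) n :=
  Finset.sum_induction ρ (SchmidtNumberLE d · n) (fun _ _ => SchmidtNumberLE.add)
    schmidtNumberLE_zero hρ

theorem vecMulVec_smul_star_smul {ι : Type*} (r : ℝ) (v : ι → ℂ) :
    vecMulVec (r • v) (star (r • v)) = (r * r) • vecMulVec v (star v) := by
  rw [star_smul, star_trivial, smul_vecMulVec, vecMulVec_smul, smul_smul]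

theorem rank_toMat_smul_le (r : ℝ) (v : Fin d × Fin d → ℂ) :
    (toMat d (r • v)).rank ≤ (toMat d v).rank := by
  have hdiag : toMat d (r • v) = diagonal (fun _ => (r : ℂ)) * toMat d v := by
    ext i j
    simp [toMat]
  exact hdiag ▸ rank_mul_le_right _ _

theorem SchmidtNumberLE.smul {r : ℝ} (hr : 0 ≤ r) (hρ : SchmidtNumberLE d ρ n) :
    SchmidtNumberLE d (r • ρ) n := by
  obtain ⟨k, w, hw, rfl⟩ := hρ
  refine ⟨k, fun i => √r • w i, fun i => (rank_toMat_smul_le _ _).trans (hw i), ?_⟩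
  simp only [vecMulVec_smul_star_smul, Real.mul_self_sqrt hr, Finset.smul_sum]

end SchmidtCone

section SubsetBlocks

open Finset

variable {α : Type*} [DecidableEq α]

theorem card_filter_mem_powersetCard {n : ℕ} (hn : 1 ≤ n) {t : Finset α} {i : α} (hi : i ∈ t) :
    #{s ∈ powersetCard n t | i ∈ s} = (#t - 1).choose (n - 1) := by
  simpa using card_filter_powersetCard_subset {i} t n (by simpa using hi) (by simpa using hn)

theorem filter_powersetCard_subset_eq_empty {n : ℕ} {u : Finset α} (hu : n < #u) (t : Finset α) :
    {s ∈ powersetCard n t | u ⊆ s} = ∅ :=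
  filter_eq_empty_iff.mpr fun _ hs hus =>
    hu.not_ge ((card_le_card hus).trans_eq (mem_powersetCard.mp hs).2)

theorem card_sub_one_mul_card_filter_mem_and_mem_powersetCard (n : ℕ) {t : Finset α} {i j : α}
    (hi : i ∈ t) (hj : j ∈ t) (hij : i ≠ j) :
    (#t - 1) * #{s ∈ powersetCard n t | i ∈ s ∧ j ∈ s} = (n - 1) * (#t - 1).choose (n - 1) := by
  have hpair (s : Finset α) : i ∈ s ∧ j ∈ s ↔ {i, j} ⊆ s := by
    rw [insert_subset_iff, singleton_subset_iff]
  have hsub : {i, j} ⊆ t := (hpair t).mp ⟨hi, hj⟩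
  simp only [hpair]
  obtain hn | hn := lt_or_ge n 2
  · rw [filter_powersetCard_subset_eq_empty (by rwa [card_pair hij]), card_empty, mul_zero,
      Nat.sub_eq_zero_of_le (Nat.le_of_lt_succ hn), zero_mul]
  · obtain ⟨k, rfl⟩ := Nat.exists_eq_add_of_le' hn
    obtain ⟨m, hm⟩ := Nat.exists_eq_add_of_le' (card_pair hij ▸ card_le_card hsub)
    rw [card_filter_powersetCard_subset {i, j} t _ hsub (by rwa [card_pair hij]), card_pair hij, hm]
    exact (Nat.add_one_mul_choose_eq m k).trans (mul_comm _ _)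

/-- The 0/1 matrix `1_S 1_Sᵀ` of a finite set `S`, with entry `1` exactly on `S × S`. -/
def blockOnes (R : Type*) [Zero R] [One R] (s : Finset α) :
    Matrix α α R :=
  Matrix.of fun i j => if i ∈ s ∧ j ∈ s then 1 else 0

theorem blockOnes_apply {R : Type*} [Zero R] [One R] (s : Finset α) (i j : α) :
    blockOnes R s i j = if i ∈ s ∧ j ∈ s then 1 else 0 :=
  rfl

theorem sum_blockOnes_apply {R : Type*} [NonAssocSemiring R] (𝒮 : Finset (Finset α)) (i j : α) :
    (∑ s ∈ 𝒮, blockOnes R s) i j = #{s ∈ 𝒮 | i ∈ s ∧ j ∈ s} := by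
  simp only [Matrix.sum_apply, blockOnes_apply, sum_boole]

variable [Fintype α]

theorem card_sub_one_nsmul_sum_powersetCard_blockOnes (R : Type*) [NonAssocSemiring R] {n : ℕ}
    (hn : 1 ≤ n) (hnα : n ≤ Fintype.card α) :
    (Fintype.card α - 1) • ∑ s ∈ powersetCard n (univ : Finset α), blockOnes R s =
      (Fintype.card α - 1).choose (n - 1) •
        ((Fintype.card α - n) • (1 : Matrix α α R) + (n - 1) • blockOnes R univ) := by
  ext i j
  simp only [Matrix.smul_apply, Matrix.add_apply, sum_blockOnes_apply, blockOnes_apply, mem_univ,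
    and_self, if_true]
  obtain rfl | hij := eq_or_ne i j
  · have hsub : Fintype.card α - n + (n - 1) = Fintype.card α - 1 := by omega
    simp only [and_self, card_filter_mem_powersetCard hn (mem_univ i), card_univ, one_apply_eq]
    rw [← add_nsmul, hsub, nsmul_one, nsmul_eq_mul, nsmul_eq_mul, Nat.cast_comm]
  · have hcount := card_sub_one_mul_card_filter_mem_and_mem_powersetCard n (mem_univ i)
      (mem_univ j) hij
    rw [card_univ] at hcount
    rw [one_apply_ne hij, smul_zero, zero_add, nsmul_one, nsmul_eq_mul, nsmul_eq_mul,
      ← Nat.cast_mul, ← Nat.cast_mul, hcount, mul_comm]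

theorem one_add_smul_blockOnes_univ (K A : Type*) [Field K] [CharZero K] [NonAssocSemiring A]
    [Module K A] {n : ℕ} (hn : 1 ≤ n) (hnα : n < Fintype.card α) :
    (1 : Matrix α α A) + (((n : K) - 1) / ((Fintype.card α : K) - n)) • blockOnes A univ =
      (((Fintype.card α : K) - 1) /
          (((Fintype.card α : K) - n) * (Fintype.card α - 1).choose (n - 1))) •
        ∑ s ∈ powersetCard n (univ : Finset α), blockOnes A s := by
  set N : K := (Fintype.card α : K)
  set C : K := ((Fintype.card α - 1).choose (n - 1) : K)
  have hN : N - n ≠ 0 := sub_ne_zero.mpr (Nat.cast_injective.ne hnα.ne')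
  have hC : C ≠ 0 := Nat.cast_ne_zero.mpr (Nat.choose_ne_zero (by omega))
  have hsum : (N - 1) • ∑ s ∈ powersetCard n (univ : Finset α), blockOnes A s =
      C • ((N - n) • (1 : Matrix α α A) + ((n : K) - 1) • blockOnes A univ) := by
    simpa only [← Nat.cast_smul_eq_nsmul K, Nat.cast_sub hnα.le, Nat.cast_sub hn,
      Nat.cast_sub (hn.trans hnα.le), Nat.cast_one]
      using card_sub_one_nsmul_sum_powersetCard_blockOnes A hn hnα.le
  calc (1 : Matrix α α A) + (((n : K) - 1) / (N - n)) • blockOnes A univ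
      = ((N - n) * C)⁻¹ • C • ((N - n) • (1 : Matrix α α A) +
          ((n : K) - 1) • blockOnes A univ) := by match_scalars <;> field_simp
    _ = ((N - 1) / ((N - n) * C)) • ∑ s ∈ powersetCard n (univ : Finset α), blockOnes A s := by
      rw [← hsum, smul_smul, inv_mul_eq_div]

end SubsetBlocks

section DiagonalEmbedding

/-- The vector `Σ_i a_i |ii⟩` on `ℂ^d ⊗ ℂ^d`. -/
def diagonalKet {d : ℕ} (a : Fin d → ℂ) : Fin d × Fin d → ℂ :=
  fun p => if p.1 = p.2 then a p.1 else 0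

/-- The linear map `|i⟩⟨j| ↦ |ii⟩⟨jj|`, that is, conjugation by the isometry `|i⟩ ↦ |ii⟩`.
It is taken `ℝ`-linear because the coefficients of `Z` and `P₊` are real scalars. -/
def diagonalEmbedding (d : ℕ) :
    Matrix (Fin d) (Fin d) ℂ →ₗ[ℝ] Matrix (Fin d × Fin d) (Fin d × Fin d) ℂ where
  toFun G := Matrix.of fun p q => if p.1 = p.2 ∧ q.1 = q.2 then G p.1 q.1 else 0
  map_add' G H := by ext p q; simp [ite_add_ite]
  map_smul' r G := by ext p q; simp

variable {d : ℕ}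

theorem diagonalEmbedding_apply (G : Matrix (Fin d) (Fin d) ℂ) (p q : Fin d × Fin d) :
    diagonalEmbedding d G p q = if p.1 = p.2 ∧ q.1 = q.2 then G p.1 q.1 else 0 :=
  rfl

theorem diagonalEmbedding_vecMulVec_star (a : Fin d → ℂ) :
    diagonalEmbedding d (vecMulVec a (star a)) =
      vecMulVec (diagonalKet a) (star (diagonalKet a)) := by
  ext p q
  by_cases hp : p.1 = p.2 <;> by_cases hq : q.1 = q.2 <;>
    simp [diagonalEmbedding_apply, vecMulVec_apply, diagonalKet, hp, hq]

theorem toMat_diagonalKet (a : Fin d → ℂ) : toMat d (diagonalKet a) = diagonal a := by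
  ext i j
  rw [toMat, of_apply, diagonalKet, diagonal_apply]

theorem schmidtNumberLE_diagonalEmbedding_vecMulVec_star (a : Fin d → ℂ) :
    SchmidtNumberLE d (diagonalEmbedding d (vecMulVec a (star a))) (Function.support a).ncard := by
  rw [diagonalEmbedding_vecMulVec_star]
  apply schmidtNumberLE_vecMulVec_star
  rw [toMat_diagonalKet, rank_diagonal, ← Nat.card_eq_fintype_card]
  exact (Nat.card_coe_set_eq (Function.support a)).le

theorem blockOnes_eq_vecMulVec_star {α : Type*} [DecidableEq α] (s : Finset α) :
    blockOnes ℂ s =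
      vecMulVec (Set.indicator (s : Set α) 1) (star (Set.indicator (s : Set α) 1)) := by
  ext i j
  by_cases hi : i ∈ s <;> by_cases hj : j ∈ s <;> simp [blockOnes, vecMulVec_apply, hi, hj]

theorem schmidtNumberLE_diagonalEmbedding_blockOnes (s : Finset (Fin d)) :
    SchmidtNumberLE d (diagonalEmbedding d (blockOnes ℂ s)) s.card := by
  have h := schmidtNumberLE_diagonalEmbedding_vecMulVec_star
    (Set.indicator (s : Set (Fin d)) (1 : Fin d → ℂ))
  simpa [← blockOnes_eq_vecMulVec_star] using h

theorem Zmat_eq_diagonalEmbedding_one : Zmat d = diagonalEmbedding d 1 := by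
  ext ⟨i, i'⟩ ⟨j, j'⟩
  simp only [Zmat, diagonalEmbedding_apply, diagonal_apply, one_apply, Prod.mk.injEq]
  grind

theorem Pplus_eq_smul_diagonalEmbedding_blockOnes_univ :
    Pplus d = (d : ℝ)⁻¹ • diagonalEmbedding d (blockOnes ℂ Finset.univ) := by
  have hpsi : psiPlus d = (√d)⁻¹ • diagonalKet (1 : Fin d → ℂ) := by
    ext p
    simp [psiPlus, diagonalKet]
  rw [Pplus, hpsi, vecMulVec_smul_star_smul, ← mul_inv, Real.mul_self_sqrt d.cast_nonneg,
    ← diagonalEmbedding_vecMulVec_star, blockOnes_eq_vecMulVec_star, Finset.coe_univ,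
    Set.indicator_univ]

theorem Zmat_add_smul_Pplus_eq_diagonalEmbedding (hd : d ≠ 0) (t : ℝ) :
    Zmat d + ((d : ℝ) * t) • Pplus d =
      diagonalEmbedding d (1 + t • blockOnes ℂ Finset.univ) := by
  have hd' : (d : ℝ) ≠ 0 := Nat.cast_ne_zero.mpr hd
  rw [Pplus_eq_smul_diagonalEmbedding_blockOnes_univ, smul_smul, mul_right_comm,
    mul_inv_cancel₀ hd', one_mul, Zmat_eq_diagonalEmbedding_one, map_add, map_smul]

end DiagonalEmbedding

/-- `K = Z + (d(n-1)/(d-n)) P₊` has Schmidt number at most `n`. -/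
theorem K_schmidt_number (d n : ℕ) (hd : 2 ≤ d) (hn : 1 ≤ n) (hnd : n < d) :
    SchmidtNumberLE d
      (Zmat d + (((d : ℝ) * ((n : ℝ) - 1)) / ((d : ℝ) - (n : ℝ))) • Pplus d) n := by
  have hdn : (0 : ℝ) < (d : ℝ) - n := sub_pos.mpr (by exact_mod_cast hnd)
  have hd1 : (0 : ℝ) ≤ (d : ℝ) - 1 := sub_nonneg.mpr (by exact_mod_cast hn.trans hnd.le)
  have hdecomp := one_add_smul_blockOnes_univ (α := Fin d) ℝ ℂ hn (by simpa using hnd)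
  rw [Fintype.card_fin] at hdecomp
  rw [mul_div_assoc, Zmat_add_smul_Pplus_eq_diagonalEmbedding (by omega), hdecomp, map_smul,
    map_sum]
  refine SchmidtNumberLE.smul (by positivity) (SchmidtNumberLE.sum fun s hs => ?_)
  rw [← (Finset.mem_powersetCard.mp hs).2]
  exact schmidtNumberLE_diagonalEmbedding_blockOnes s
end

section
/- Let d ≥ 2 and 1 ≤ n ≤ d. Then the matrix P_+ + ((d−n)/n) · (𝟙 − Z)/(d² − d) on ℂ^d ⊗ ℂ^d has Schmidt number at most n. -/
open Matrix BigOperators Kronecker ComplexOrder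

/-!
If `G` has unit diagonal and rank at most `n`, then so has its conjugate by any monomial matrix.
Average `g gᴴ`, with `g` the vector of such a conjugate, over all permutations and all diagonal
matrices of cube roots of unity. The phases kill every matrix entry except those at `(ii, kk)`,
which are all `1` and give `d • P₊`, and those at `(ij, ij)`, which the permutations make equal to
the mean of `|G a b|²` over `a ≠ b`. For `G` take `d / n` times the projection onto the span of `n`
Fourier vectors: its squared Frobenius norm is `d² / n`, of which the diagonal contributes `d`.
-/

open Finset
open scoped ComplexConjugate

section SchmidtNumber

variable {d n : ℕ}

/-- The vector on `ℂ^d ⊗ ℂ^d` with associated matrix `M`; inverse to `toMat`. -/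
def toVec (M : Matrix (Fin d) (Fin d) ℂ) : Fin d × Fin d → ℂ := fun p => M p.1 p.2

theorem toMat_toVec (M : Matrix (Fin d) (Fin d) ℂ) : toMat d (toVec M) = M := rfl

theorem SchmidtNumberLE.sum_vecMulVec {κ : Type*} [Fintype κ] {w : κ → Fin d × Fin d → ℂ}
    (h : ∀ x, (toMat d (w x)).rank ≤ n) :
    SchmidtNumberLE d (∑ x, vecMulVec (w x) (star (w x))) n :=
  ⟨Fintype.card κ, fun i => w ((Fintype.equivFin κ).symm i), fun _ => h _,
    (Equiv.sum_comp (Fintype.equivFin κ).symm fun x => vecMulVec (w x) (star (w x))).symm⟩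

theorem SchmidtNumberLE.smul_s8 {ρ : Matrix (Fin d × Fin d) (Fin d × Fin d) ℂ}
    (h : SchmidtNumberLE d ρ n) {c : ℝ} (hc : 0 ≤ c) : SchmidtNumberLE d (c • ρ) n := by
  obtain ⟨k, w, hw, rfl⟩ := h
  refine ⟨k, fun i => √c • w i, fun i => ?_, ?_⟩
  · have hmat : toMat d (√c • w i) = toMat d (w i) * diagonal fun _ => (√c : ℂ) := by
      ext a b
      simp [toMat, mul_comm]
    rw [hmat]
    exact (rank_mul_le_left _ _).trans (hw i)
  · simp only [star_smul, star_trivial, smul_vecMulVec, vecMulVec_smul, smul_smul,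
      Real.mul_self_sqrt hc, smul_sum]

theorem Pplus_apply (i j k l : Fin d) :
    Pplus d (i, j) (k, l) = if i = j ∧ k = l then (d : ℂ)⁻¹ else 0 := by
  have hsq : (√d : ℂ)⁻¹ * (√d : ℂ)⁻¹ = (d : ℂ)⁻¹ := by
    rw [← mul_inv, ← Complex.ofReal_mul, Real.mul_self_sqrt d.cast_nonneg, Complex.ofReal_natCast]
  by_cases hij : i = j <;> by_cases hkl : k = l <;>
    simp [Pplus, psiPlus, vecMulVec_apply, hij, hkl, hsq]

theorem one_sub_Zmat_apply (i j k l : Fin d) :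
    (1 - Zmat d) (i, j) (k, l) = if i ≠ j ∧ i = k ∧ j = l then 1 else 0 := by
  by_cases hij : i = j <;> by_cases hik : i = k <;> by_cases hjl : j = l <;>
    simp_all [Zmat, one_apply]

end SchmidtNumber

section CharacterSums

variable {ι R : Type*} [Fintype ι] [CommRing R] [Fintype R]

theorem addChar_map_sum_eq_prod {A M κ : Type*} [AddCommMonoid A] [CommMonoid M] (ψ : AddChar A M)
    (f : κ → A) (s : Finset κ) : ψ (∑ i ∈ s, f i) = ∏ i ∈ s, ψ (f i) :=
  map_prod ψ.toMonoidHom (fun i => Multiplicative.ofAdd (f i)) s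

theorem sum_addChar_dotProduct [DecidableEq ι] [DecidableEq R] {R' : Type*} [CommRing R']
    [IsDomain R'] {ψ : AddChar R R'} (hψ : ψ.IsPrimitive) (v : ι → R) :
    ∑ z : ι → R, ψ (z ⬝ᵥ v) = if v = 0 then (Fintype.card R : R') ^ Fintype.card ι else 0 := by
  calc ∑ z : ι → R, ψ (z ⬝ᵥ v)
      = ∏ m, ∑ x : R, ψ (x * v m) := by
        simp only [prod_univ_sum, Fintype.piFinset_univ, dotProduct, addChar_map_sum_eq_prod]
    _ = ∏ m, if v m = 0 then (Fintype.card R : R') else 0 := by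
        simp only [AddChar.sum_mulShift _ hψ, Nat.cast_ite, Nat.cast_zero]
    _ = _ := by
        simp only [prod_ite_zero, prod_const, card_univ, mem_univ, forall_const, funext_iff,
          Pi.zero_apply]

-- Over `ZMod 2` the phases are signs, and the terms with `i = l`, `j = k` survive as well.
theorem sum_addChar_sub_mul_conj [DecidableEq ι] {ψ : AddChar R ℂ} (hψ : ψ.IsPrimitive)
    (h2 : (2 : R) ≠ 0) (i j k l : ι) :
    ∑ z : ι → R, ψ (z i - z j) * conj (ψ (z k - z l)) =
      if i = j ∧ k = l ∨ i = k ∧ j = l then (Fintype.card R : ℂ) ^ Fintype.card ι else 0 := by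
  classical
  have h1 : (1 : R) ≠ 0 := fun h => h2 (by rw [← one_add_one_eq_two, h, add_zero])
  have hv : (Pi.single i 1 + Pi.single l 1 - (Pi.single j 1 + Pi.single k 1) : ι → R) = 0 ↔
      i = j ∧ k = l ∨ i = k ∧ j = l := by
    rw [sub_eq_zero, Pi.single_add_single_eq_single_add_single h1 h1, one_add_one_eq_two]
    simp [h2, eq_comm]
  simp only [← hv, ← sum_addChar_dotProduct hψ]
  refine sum_congr rfl fun z _ => ?_
  rw [← AddChar.map_neg_eq_conj, ← AddChar.map_add_eq_mul]
  congr 1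
  simp only [dotProduct_sub, dotProduct_add, dotProduct_single, mul_one]
  ring

theorem isHadamard_of_isPrimitive [DecidableEq R] {ψ : AddChar R ℂ} (hψ : ψ.IsPrimitive) :
    (of fun x y => ψ (x * y)).IsHadamard := by
  refine .of_mul_conjTranspose (fun x y => ?_) ?_ (.of_ne_zero (by simp))
  · rw [Unitary.mem_iff_star_mul_self, of_apply, RCLike.star_def, ← AddChar.map_neg_eq_conj,
      ← AddChar.map_add_eq_mul, neg_add_cancel, AddChar.map_zero_eq_one]
  · ext x y
    simp only [mul_apply, conjTranspose_apply, of_apply, RCLike.star_def,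
      ← AddChar.map_neg_eq_conj, ← AddChar.map_add_eq_mul, Matrix.smul_apply]
    calc ∑ t, ψ (x * t + -(y * t))
        = ∑ t, ψ (t * (x - y)) := sum_congr rfl fun t _ => by ring_nf
      _ = (Fintype.card R : ℂ) • (1 : Matrix R R ℂ) x y := by
        simp [AddChar.sum_mulShift _ hψ, one_apply, sub_eq_zero]

end CharacterSums

section Twirl

variable {ι R : Type*} [CommRing R]

/-- The conjugate of `G` by the monomial matrix made up of the permutation `x.2` and the phases
`ψ (x.1 i)`; the averages run over all `x`. -/
def monomialConj (ψ : AddChar R ℂ) (G : Matrix ι ι ℂ) (x : (ι → R) × Equiv.Perm ι) :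
    Matrix ι ι ℂ :=
  of fun i j => ψ (x.1 i - x.1 j) * G (x.2 i) (x.2 j)

theorem monomialConj_apply_self (ψ : AddChar R ℂ) (G : Matrix ι ι ℂ)
    (x : (ι → R) × Equiv.Perm ι) (i : ι) : monomialConj ψ G x i i = G (x.2 i) (x.2 i) := by
  simp [monomialConj]

theorem norm_monomialConj_apply [Finite R] (ψ : AddChar R ℂ) (G : Matrix ι ι ℂ)
    (x : (ι → R) × Equiv.Perm ι) (i j : ι) :
    ‖monomialConj ψ G x i j‖ = ‖G (x.2 i) (x.2 j)‖ := by
  simp [monomialConj, AddChar.norm_apply]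

variable [Fintype ι]

theorem rank_monomialConj_le (ψ : AddChar R ℂ) (G : Matrix ι ι ℂ)
    (x : (ι → R) × Equiv.Perm ι) : (monomialConj ψ G x).rank ≤ G.rank := by
  classical
  have hfactor : monomialConj ψ G x = diagonal (fun i => ψ (x.1 i)) * G.submatrix x.2 x.2 *
      diagonal (fun j => ψ (-x.1 j)) := by
    ext i j
    simp only [monomialConj, of_apply, sub_eq_add_neg, AddChar.map_add_eq_mul, mul_diagonal,
      diagonal_mul, submatrix_apply]
    ring
  calc (monomialConj ψ G x).rank
      ≤ (diagonal (fun i => ψ (x.1 i)) * G.submatrix x.2 x.2).rank :=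
        hfactor ▸ rank_mul_le_left _ _
    _ ≤ (G.submatrix x.2 x.2).rank := rank_mul_le_right _ _
    _ = G.rank := rank_submatrix G x.2 x.2

variable [DecidableEq ι]

theorem card_offDiag_nsmul_sum_perm_apply {M : Type*} [AddCommMonoid M] {i j : ι} (hij : i ≠ j)
    (f : ι → ι → M) :
    #(univ : Finset ι).offDiag • ∑ σ : Equiv.Perm ι, f (σ i) (σ j) =
      (Fintype.card ι).factorial • ∑ p ∈ univ.offDiag, f p.1 p.2 := by
  have hpair : ∀ p ∈ univ.offDiag,
      ∑ σ : Equiv.Perm ι, f (σ p.1) (σ p.2) = ∑ σ : Equiv.Perm ι, f (σ i) (σ j) := by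
    intro p hp
    obtain ⟨τ, hi, hj⟩ := MulAction.is_two_pretransitive_iff.1
      (Equiv.Perm.isMultiplyPretransitive ι 2) hij (mem_offDiag.1 hp).2.2
    rw [← hi, ← hj]
    exact Equiv.sum_comp (Equiv.mulRight τ) fun σ : Equiv.Perm ι => f (σ i) (σ j)
  have hperm (σ : Equiv.Perm ι) :
      ∑ p ∈ univ.offDiag, f (σ p.1) (σ p.2) = ∑ p ∈ univ.offDiag, f p.1 p.2 :=
    sum_equiv (σ.prodCongr σ) (by simp) (by simp)
  calc #univ.offDiag • ∑ σ : Equiv.Perm ι, f (σ i) (σ j)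
      = ∑ p ∈ univ.offDiag, ∑ σ : Equiv.Perm ι, f (σ p.1) (σ p.2) := by
        rw [sum_congr rfl hpair, sum_const]
    _ = (Fintype.card ι).factorial • ∑ p ∈ univ.offDiag, f p.1 p.2 := by
        rw [sum_comm, sum_congr rfl fun σ _ => hperm σ, sum_const, card_univ, Fintype.card_perm]

theorem sum_monomialConj_mul_conj_eq_zero [Fintype R] {ψ : AddChar R ℂ} (hψ : ψ.IsPrimitive)
    (h2 : (2 : R) ≠ 0) (G : Matrix ι ι ℂ) {i j k l : ι} (h : ¬(i = j ∧ k = l ∨ i = k ∧ j = l)) :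
    ∑ x, monomialConj ψ G x i j * conj (monomialConj ψ G x k l) = 0 := by
  calc ∑ x, monomialConj ψ G x i j * conj (monomialConj ψ G x k l)
      = (∑ z : ι → R, ψ (z i - z j) * conj (ψ (z k - z l))) *
          ∑ σ : Equiv.Perm ι, G (σ i) (σ j) * conj (G (σ k) (σ l)) := by
        simp only [sum_mul_sum, Fintype.sum_prod_type, monomialConj, of_apply, map_mul,
          mul_mul_mul_comm]
    _ = 0 := by rw [sum_addChar_sub_mul_conj hψ h2, if_neg h, zero_mul]

theorem sum_norm_sq_monomialConj [Fintype R] (ψ : AddChar R ℂ) (G : Matrix ι ι ℂ) {i j : ι}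
    (hij : i ≠ j) :
    ∑ x, ‖monomialConj ψ G x i j‖ ^ 2 =
      (Fintype.card R : ℝ) ^ Fintype.card ι * (Fintype.card ι).factorial *
        ((∑ p ∈ univ.offDiag, ‖G p.1 p.2‖ ^ 2) / #(univ : Finset ι).offDiag) := by
  have hcard : (#(univ : Finset ι).offDiag : ℝ) ≠ 0 :=
    Nat.cast_ne_zero.2 (card_ne_zero_of_mem (a := (i, j)) (by simpa using hij))
  have hmean := card_offDiag_nsmul_sum_perm_apply hij fun a b => ‖G a b‖ ^ 2
  simp only [nsmul_eq_mul] at hmean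
  calc ∑ x, ‖monomialConj ψ G x i j‖ ^ 2
      = (Fintype.card R : ℝ) ^ Fintype.card ι * ∑ σ : Equiv.Perm ι, ‖G (σ i) (σ j)‖ ^ 2 := by
        simp only [norm_monomialConj_apply, Fintype.sum_prod_type, sum_const, card_univ,
          Fintype.card_fun, nsmul_eq_mul, Nat.cast_pow]
    _ = _ := by
        rw [mul_assoc, ← mul_div_assoc, ← hmean, mul_div_cancel_left₀ _ hcard]

theorem sum_vecMulVec_monomialConj {d : ℕ} [Fintype R] {ψ : AddChar R ℂ} (hψ : ψ.IsPrimitive)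
    (h2 : (2 : R) ≠ 0) {G : Matrix (Fin d) (Fin d) ℂ} (hG : ∀ i, G i i = 1) :
    ∑ x, vecMulVec (toVec (monomialConj ψ G x)) (star (toVec (monomialConj ψ G x))) =
      ((Fintype.card R : ℝ) ^ d * d.factorial * d) • (Pplus d +
        ((∑ p ∈ univ.offDiag, ‖G p.1 p.2‖ ^ 2) / (d * ((d : ℝ) ^ 2 - d))) • (1 - Zmat d)) := by
  ext ⟨i, j⟩ ⟨k, l⟩
  have hd : (d : ℂ) ≠ 0 := Nat.cast_ne_zero.2 i.pos.ne'
  simp only [Matrix.sum_apply, vecMulVec_apply, Pi.star_apply, RCLike.star_def, toVec,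
    Matrix.smul_apply, Matrix.add_apply, Pplus_apply, one_sub_Zmat_apply, Complex.real_smul]
  by_cases hdiag : i = j ∧ k = l
  · obtain ⟨rfl, rfl⟩ := hdiag
    simp [monomialConj_apply_self, hG, hd, Fintype.card_perm]
  by_cases hoff : i = k ∧ j = l
  · obtain ⟨rfl, rfl⟩ := hoff
    have hij : i ≠ j := by simpa using hdiag
    have hcard : (#(univ : Finset (Fin d)).offDiag : ℝ) = (d : ℝ) ^ 2 - d := by
      simp [offDiag_card, Nat.cast_sub (Nat.le_mul_self d), sq]
    simp only [Complex.mul_conj', ← Complex.ofReal_pow, ← Complex.ofReal_sum,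
      sum_norm_sq_monomialConj ψ G hij, hcard, Fintype.card_fin, hij, if_false, ne_eq,
      not_false_eq_true, and_self, if_true, Complex.ofReal_mul, Complex.ofReal_div,
      Complex.ofReal_natCast, zero_add, mul_one]
    field_simp
  · simp [sum_monomialConj_mul_conj_eq_zero hψ h2 G (not_or.2 ⟨hdiag, hoff⟩), hdiag, hoff]

theorem schmidtNumberLE_of_unit_diag {d n : ℕ} [NeZero d] {G : Matrix (Fin d) (Fin d) ℂ}
    (hdiag : ∀ i, G i i = 1) (hrank : G.rank ≤ n) :
    SchmidtNumberLE d (Pplus d +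
      ((∑ p ∈ univ.offDiag, ‖G p.1 p.2‖ ^ 2) / (d * ((d : ℝ) ^ 2 - d))) • (1 - Zmat d)) n := by
  have hsum := sum_vecMulVec_monomialConj (ZMod.isPrimitive_stdAddChar 3) (by decide) hdiag
  have hle := SchmidtNumberLE.sum_vecMulVec fun x : (Fin d → ZMod 3) × Equiv.Perm (Fin d) =>
    (toMat_toVec (monomialConj ZMod.stdAddChar G x)).symm ▸ (rank_monomialConj_le _ _ x).trans hrank
  rw [hsum] at hle
  have hc : (0 : ℝ) < (Fintype.card (ZMod 3) : ℝ) ^ d * d.factorial * d := by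
    have := NeZero.pos d
    positivity
  simpa only [inv_smul_smul₀ hc.ne'] using hle.smul_s8 (inv_nonneg.2 hc.le)

end Twirl

section NormalizedGram

variable {ι κ : Type*}

theorem conjTranspose_mul_self_submatrix_of_isHadamard [Fintype ι] [DecidableEq ι] [DecidableEq κ]
    {H : Matrix ι ι ℂ} (hH : H.IsHadamard) (f : κ ↪ ι) :
    (H.submatrix id f)ᴴ * H.submatrix id f = (Fintype.card ι : ℂ) • 1 := by
  rw [conjTranspose_submatrix, ← submatrix_mul _ _ _ _ _ Function.bijective_id,
    hH.conjTranspose_mul, submatrix_smul, Pi.smul_apply, Pi.smul_apply,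
    submatrix_one f f.injective]

variable [Fintype κ]

/-- The Gram matrix of the rows of `A`, normalised so that it has unit diagonal when the entries of
`A` have modulus one. If moreover the columns of `A` are orthogonal, it is a multiple of the
projection onto their span. -/
noncomputable def normalizedGram (A : Matrix ι κ ℂ) : Matrix ι ι ℂ :=
  (Fintype.card κ : ℂ)⁻¹ • (A * Aᴴ)

theorem normalizedGram_apply_self [Nonempty κ] {A : Matrix ι κ ℂ}
    (hA : ∀ i a, A i a ∈ unitary ℂ) (i : ι) : normalizedGram A i i = 1 := by
  have hunit (a : κ) : A i a * conj (A i a) = 1 := Unitary.mul_star_self_of_mem (hA i a)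
  simp [normalizedGram, mul_apply, hunit]

theorem rank_normalizedGram_le [Fintype ι] (A : Matrix ι κ ℂ) :
    (normalizedGram A).rank ≤ Fintype.card κ := by
  rw [normalizedGram, ← smul_mul]
  exact (rank_mul_le_left _ _).trans (rank_le_card_width _)

theorem trace_normalizedGram_mul_conjTranspose [Fintype ι] [DecidableEq κ] [Nonempty κ]
    {A : Matrix ι κ ℂ} (hA : Aᴴ * A = (Fintype.card ι : ℂ) • 1) :
    (normalizedGram A * (normalizedGram A)ᴴ).trace =
      (Fintype.card ι : ℂ) ^ 2 / Fintype.card κ := by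
  have hcomm : (A * Aᴴ * (A * Aᴴ)).trace = (Aᴴ * A * (Aᴴ * A)).trace := by
    rw [Matrix.mul_assoc, trace_mul_comm, ← Matrix.mul_assoc, ← Matrix.mul_assoc]
  have hκ : (Fintype.card κ : ℂ) ≠ 0 := by simp
  calc (normalizedGram A * (normalizedGram A)ᴴ).trace
      = (Fintype.card κ : ℂ)⁻¹ ^ 2 * (Aᴴ * A * (Aᴴ * A)).trace := by
        simp [normalizedGram, hcomm, sq, mul_assoc]
    _ = (Fintype.card κ : ℂ)⁻¹ ^ 2 * ((Fintype.card ι : ℂ) ^ 2 * Fintype.card κ) := by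
        simp [hA, sq, mul_assoc]
    _ = (Fintype.card ι : ℂ) ^ 2 / Fintype.card κ := by field_simp

theorem trace_mul_conjTranspose_eq_card_add [Fintype ι] {G : Matrix ι ι ℂ}
    (hG : ∀ i, G i i = 1) :
    (G * Gᴴ).trace = Fintype.card ι + ∑ p ∈ univ.offDiag, (‖G p.1 p.2‖ : ℂ) ^ 2 := by
  classical
  calc (G * Gᴴ).trace
      = ((∑ p : ι × ι, ‖G p.1 p.2‖ ^ 2 : ℝ) : ℂ) := by
        simp [trace, mul_apply, Fintype.sum_prod_type, Complex.mul_conj']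
    _ = ((∑ p ∈ univ.diag, ‖G p.1 p.2‖ ^ 2 +
          ∑ p ∈ univ.offDiag, ‖G p.1 p.2‖ ^ 2 : ℝ) : ℂ) := by
        rw [← sum_union (disjoint_diag_offDiag _), diag_union_offDiag, univ_product_univ]
    _ = _ := by simp [hG]

theorem sum_offDiag_norm_sq_normalizedGram [Fintype ι] [DecidableEq κ] [Nonempty κ]
    {A : Matrix ι κ ℂ} (hA : ∀ i a, A i a ∈ unitary ℂ)
    (horth : Aᴴ * A = (Fintype.card ι : ℂ) • 1) :
    ∑ p ∈ univ.offDiag, ‖normalizedGram A p.1 p.2‖ ^ 2 =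
      (Fintype.card ι : ℝ) ^ 2 / Fintype.card κ - Fintype.card ι := by
  have htrace := trace_mul_conjTranspose_eq_card_add (normalizedGram_apply_self hA)
  rw [trace_normalizedGram_mul_conjTranspose horth] at htrace
  rw [eq_sub_iff_add_eq', ← Complex.ofReal_inj]
  push_cast
  exact htrace.symm

theorem exists_isHadamard (d : ℕ) [NeZero d] : ∃ H : Matrix (Fin d) (Fin d) ℂ, H.IsHadamard :=
  ⟨_, (isHadamard_submatrix_equiv_iff (ZMod.finEquiv d).toEquiv (ZMod.finEquiv d).toEquiv).2
    (isHadamard_of_isPrimitive (ZMod.isPrimitive_stdAddChar d))⟩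

theorem exists_unit_diag_rank_le {d n : ℕ} [NeZero n] (hnd : n ≤ d) :
    ∃ G : Matrix (Fin d) (Fin d) ℂ, (∀ i, G i i = 1) ∧ G.rank ≤ n ∧
      ∑ p ∈ univ.offDiag, ‖G p.1 p.2‖ ^ 2 = (d : ℝ) ^ 2 / n - d := by
  have : NeZero d := ⟨by have := NeZero.pos n; lia⟩
  obtain ⟨H, hH⟩ := exists_isHadamard d
  let A : Matrix (Fin d) (Fin n) ℂ := H.submatrix id (Fin.castLEEmb hnd)
  have hA (i a) : A i a ∈ unitary ℂ := hH.apply_mem _ _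
  refine ⟨normalizedGram A, normalizedGram_apply_self hA, ?_, ?_⟩
  · simpa using rank_normalizedGram_le A
  · simpa using sum_offDiag_norm_sq_normalizedGram hA
      (conjTranspose_mul_self_submatrix_of_isHadamard hH _)

end NormalizedGram

/-- `P₊ + ((d-n)/n) · (𝟙 - Z)/(d² - d)` has Schmidt number at most `n`. -/
theorem mes_plus_ball_schmidt_number (d n : ℕ) (hd : 2 ≤ d) (hn : 1 ≤ n) (hnd : n ≤ d) :
    SchmidtNumberLE d
      (Pplus d + ((((d : ℝ) - n) / n) / ((d : ℝ) ^ 2 - d)) •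
        ((1 : Matrix (Fin d × Fin d) (Fin d × Fin d) ℂ) - Zmat d)) n := by
  have : NeZero n := ⟨by lia⟩
  have : NeZero d := ⟨by lia⟩
  obtain ⟨G, hdiag, hrank, hoff⟩ := exists_unit_diag_rank_le hnd
  have hcoeff : ((d : ℝ) ^ 2 / n - d) / (d * ((d : ℝ) ^ 2 - d)) =
      (((d : ℝ) - n) / n) / ((d : ℝ) ^ 2 - d) := by
    rw [← mul_div_mul_left (((d : ℝ) - n) / n) _ (NeZero.ne (d : ℝ))]
    field_simp
  rw [← hcoeff, ← hoff]
  exact schmidtNumberLE_of_unit_diag hdiag hrank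
end

section
/- Upper bound on the generalised Schmidt robustness of a pure state: let d ≥ 2, 1 ≤ n < d, and let ψ = Σ_i a_i |ii⟩ with a_i ≥ 0 and Σ_i a_i² = 1. Then the matrix ψψ† + ((d−n)/((d−1)n)) · Σ_{i≠j} a_i a_j |ij⟩⟨ij| on ℂ^d ⊗ ℂ^d has Schmidt number at most n. -/
open Matrix BigOperators Kronecker ComplexOrder

/-- The vector `Σ_i a_i |ii⟩`. -/
noncomputable def ketDiag (d : ℕ) (a : Fin d → ℝ) : Fin d × Fin d → ℂ :=
  fun p => if p.1 = p.2 then ((a p.1 : ℝ) : ℂ) else 0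

/-!
Local operators do not increase Schmidt rank, so conjugating by local diagonal matrices reduces the
theorem to `a = 1`. In that case, for a set `S` of `n` characters of a group of order `d` the vector
`K_S (i, j) = ∑ χ ∈ S, χ (i - j)` has Schmidt rank at most `n`. In the sum of `K_S K_Sᴴ` over all
such `S`, the entries coupling `|ii⟩` to `|kk⟩` are all equal, and for `i ≠ j` the diagonal entry at
`(i, j)` is a second moment of sampling without replacement, which yields the factor
`(d - n) / ((d - 1) n)`. Averaging over local phases `D ⊗ D⁻¹` removes every other entry.
-/

section SchmidtRank

variable {d n : ℕ} {ρ σ : Matrix (Fin d × Fin d) (Fin d × Fin d) ℂ}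

lemma toMat_kronecker_mulVec (B C : Matrix (Fin d) (Fin d) ℂ) (v : Fin d × Fin d → ℂ) :
    toMat d ((B ⊗ₖ C) *ᵥ v) = B * toMat d v * Cᵀ := by
  have hvec : v = vec (toMat d v)ᵀ := rfl
  have hmul : (B ⊗ₖ C) *ᵥ v = vec (B * toMat d v * Cᵀ)ᵀ := by
    conv_lhs => rw [hvec, kronecker_mulVec_vec]
    simp only [transpose_mul, transpose_transpose, Matrix.mul_assoc]
  rw [hmul]
  rfl

lemma rank_toMat_kronecker_mulVec_le (B C : Matrix (Fin d) (Fin d) ℂ) (v : Fin d × Fin d → ℂ) :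
    (toMat d ((B ⊗ₖ C) *ᵥ v)).rank ≤ (toMat d v).rank := by
  rw [toMat_kronecker_mulVec]
  exact (rank_mul_le_left _ _).trans (rank_mul_le_right _ _)

namespace SchmidtNumberLE

lemma vecMulVec_star {v : Fin d × Fin d → ℂ} (hv : (toMat d v).rank ≤ n) :
    SchmidtNumberLE d (vecMulVec v (star v)) n :=
  ⟨1, fun _ => v, fun _ => hv, by simp⟩

lemma zero : SchmidtNumberLE d 0 n :=
  ⟨0, Fin.elim0, fun i => i.elim0, by simp⟩

lemma add_s11 (hρ : SchmidtNumberLE d ρ n) (hσ : SchmidtNumberLE d σ n) :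
    SchmidtNumberLE d (ρ + σ) n := by
  obtain ⟨k, v, hv, rfl⟩ := hρ
  obtain ⟨l, w, hw, rfl⟩ := hσ
  refine ⟨k + l, Fin.append v w, fun i => ?_, ?_⟩
  · induction i using Fin.addCases with
    | left i => simpa only [Fin.append_left] using hv i
    | right i => simpa only [Fin.append_right] using hw i
  · simp only [Fin.sum_univ_add, Fin.append_left, Fin.append_right]

lemma sum_s11 {ι : Type*} {s : Finset ι} {ρ : ι → Matrix (Fin d × Fin d) (Fin d × Fin d) ℂ}
    (hρ : ∀ i ∈ s, SchmidtNumberLE d (ρ i) n) : SchmidtNumberLE d (∑ i ∈ s, ρ i) n :=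
  Finset.sum_induction ρ (SchmidtNumberLE d · n) (fun _ _ => add_s11) zero hρ

lemma kronecker_conj (hρ : SchmidtNumberLE d ρ n) (B C : Matrix (Fin d) (Fin d) ℂ) :
    SchmidtNumberLE d ((B ⊗ₖ C) * ρ * (B ⊗ₖ C)ᴴ) n := by
  obtain ⟨k, w, hw, rfl⟩ := hρ
  refine ⟨k, fun i => (B ⊗ₖ C) *ᵥ w i,
    fun i => (rank_toMat_kronecker_mulVec_le B C (w i)).trans (hw i), ?_⟩
  simp only [Matrix.mul_sum, Matrix.sum_mul, mul_vecMulVec, vecMulVec_mul, star_mulVec]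

lemma smul_s11 (hρ : SchmidtNumberLE d ρ n) {c : ℝ} (hc : 0 ≤ c) : SchmidtNumberLE d (c • ρ) n := by
  simpa [smul_kronecker, smul_smul, Real.mul_self_sqrt hc] using hρ.kronecker_conj (√c • 1) 1

lemma of_smul {c : ℝ} (hc : 0 < c) (h : SchmidtNumberLE d (c • ρ) n) : SchmidtNumberLE d ρ n := by
  simpa only [inv_smul_smul₀ hc.ne'] using h.smul_s11 (inv_nonneg.2 hc.le)

end SchmidtNumberLE

end SchmidtRank

section PhaseTwirl

/-- The average of `U ρ Uᴴ` over the local unitaries `U = D ⊗ D⁻¹` with `D` diagonal: it keeps the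
entries between vectors `|ii⟩` and the diagonal ones, and replaces all others by zero. -/
def phaseTwirl {ι R : Type*} [DecidableEq ι] [Zero R] (ρ : Matrix (ι × ι) (ι × ι) R) :
    Matrix (ι × ι) (ι × ι) R :=
  of fun p q => if p.1 = p.2 ∧ q.1 = q.2 ∨ p = q then ρ p q else 0

variable {ι : Type*} [DecidableEq ι]

/-- The unitary `D ⊗ D⁻¹` with `D` the diagonal matrix of the phases `θ (e i)`, where the `e i` are
the standard generators of `ι → ZMod 3`; letting `θ` vary makes the phases of `D` independent and
uniform among the cube roots of unity. Signs would not do: they also keep the entries between `|ij⟩`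
and `|ji⟩`. -/
def twirlUnitary (θ : AddChar (ι → ZMod 3) ℂ) : Matrix (ι × ι) (ι × ι) ℂ :=
  diagonal (fun i => θ (Pi.single i 1)) ⊗ₖ diagonal (fun i => θ (Pi.single i (-1)))

lemma single_add_single_neg_sub_eq_zero_iff {M : Type*} [AddCommGroup M] {u : M} (hu : u ≠ -u)
    {i j k l : ι} :
    (Pi.single i u + Pi.single j (-u) - (Pi.single k u + Pi.single l (-u)) : ι → M) = 0 ↔
      i = j ∧ k = l ∨ i = k ∧ j = l := by
  have hu0 : u ≠ 0 := fun h => hu (by rw [h, neg_zero])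
  rw [sub_eq_zero, Pi.single_add_single_eq_single_add_single hu0 (neg_ne_zero.2 hu0)]
  simp only [hu, false_and, false_or, add_neg_cancel, true_and]
  exact or_comm

variable [Fintype ι]

lemma twirlUnitary_conj_apply (θ : AddChar (ι → ZMod 3) ℂ) (ρ : Matrix (ι × ι) (ι × ι) ℂ)
    (i j k l : ι) :
    (twirlUnitary θ * ρ * (twirlUnitary θ)ᴴ) (i, j) (k, l) =
      θ (Pi.single i 1 + Pi.single j (-1) - (Pi.single k 1 + Pi.single l (-1))) *
        ρ (i, j) (k, l) := by
  simp only [twirlUnitary, diagonal_kronecker_diagonal, diagonal_conjTranspose, mul_diagonal,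
    diagonal_mul, Pi.star_apply, ← AddChar.map_add_eq_mul, RCLike.star_def,
    ← AddChar.map_neg_eq_conj, sub_eq_add_neg (_ + _)]
  rw [AddChar.map_add_eq_mul θ (_ + _)]
  ring

lemma sum_twirlUnitary_conj (ρ : Matrix (ι × ι) (ι × ι) ℂ) :
    ∑ θ, twirlUnitary θ * ρ * (twirlUnitary θ)ᴴ =
      (Fintype.card (ι → ZMod 3) : ℝ) • phaseTwirl ρ := by
  have hne : (1 : ZMod 3) ≠ -1 := by decide
  ext ⟨i, j⟩ ⟨k, l⟩
  simp only [Matrix.sum_apply, twirlUnitary_conj_apply, ← Finset.sum_mul, AddChar.sum_apply_eq_ite,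
    single_add_single_neg_sub_eq_zero_iff hne, phaseTwirl, Matrix.smul_apply, of_apply,
    Prod.mk.injEq, Complex.real_smul, Complex.ofReal_natCast, ite_mul, zero_mul, mul_ite, mul_zero]

lemma SchmidtNumberLE.phaseTwirl {d n : ℕ} {ρ : Matrix (Fin d × Fin d) (Fin d × Fin d) ℂ}
    (hρ : SchmidtNumberLE d ρ n) : SchmidtNumberLE d (phaseTwirl ρ) n := by
  have h : SchmidtNumberLE d (∑ θ, twirlUnitary θ * ρ * (twirlUnitary θ)ᴴ) n :=
    SchmidtNumberLE.sum_s11 fun _ _ => hρ.kronecker_conj _ _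
  rw [sum_twirlUnitary_conj] at h
  exact h.of_smul (Nat.cast_pos.2 Fintype.card_pos)

end PhaseTwirl

section Sampling

open Finset

variable {α : Type*} {n : ℕ}

lemma card_filter_mem_notMem_powersetCard [DecidableEq α] {t : Finset α} {a b : α}
    (ha : a ∈ t) (hb : b ∈ t) (hab : a ≠ b) (hn : 1 ≤ n) :
    #{S ∈ t.powersetCard n | a ∈ S ∧ b ∉ S} = (#t - 2).choose (n - 1) := by
  have heq : {S ∈ t.powersetCard n | a ∈ S ∧ b ∉ S} =
      {S ∈ (t.erase b).powersetCard n | {a} ⊆ S} := by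
    ext S
    simp only [mem_filter, mem_powersetCard, subset_erase, singleton_subset_iff]
    tauto
  have hsub : {a} ⊆ t.erase b := singleton_subset_iff.2 (mem_erase.2 ⟨hab, ha⟩)
  rw [heq, card_filter_powersetCard_subset _ _ _ hsub (by simpa using hn), card_singleton,
    card_erase_of_mem hb, Nat.sub_sub]

lemma sum_powersetCard_sum_mul_sum_sdiff [DecidableEq α] {R : Type*} [CommRing R]
    (t : Finset α) (f g : α → R) (hn : 1 ≤ n) :
    ∑ S ∈ t.powersetCard n, (∑ a ∈ S, f a) * ∑ b ∈ t \ S, g b =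
      (#t - 2).choose (n - 1) * ((∑ a ∈ t, f a) * (∑ b ∈ t, g b) - ∑ a ∈ t, f a * g a) := by
  have hprod : ∀ S ∈ t.powersetCard n, (∑ a ∈ S, f a) * ∑ b ∈ t \ S, g b =
      ∑ a ∈ t, ∑ b ∈ t, if a ∈ S ∧ b ∉ S then f a * g b else 0 := by
    intro S hS
    have hf : ∑ a ∈ S, f a = ∑ a ∈ t, if a ∈ S then f a else 0 := by
      rw [← sum_filter, filter_mem_eq_inter, inter_eq_right.2 (mem_powersetCard.1 hS).1]
    have hg : ∑ b ∈ t \ S, g b = ∑ b ∈ t, if b ∉ S then g b else 0 := by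
      rw [← sum_filter, filter_notMem_eq_sdiff]
    simp only [hf, hg, sum_mul_sum, ite_zero_mul_ite_zero]
  have hcount : ∀ a ∈ t, ∀ b ∈ t,
      ∑ S ∈ t.powersetCard n, (if a ∈ S ∧ b ∉ S then f a * g b else 0) =
        (#t - 2).choose (n - 1) * (f a * g b - if a = b then f a * g b else 0) := by
    intro a ha b hb
    rcases eq_or_ne a b with rfl | hab
    · simp
    · rw [← sum_filter, sum_const, card_filter_mem_notMem_powersetCard ha hb hab hn, nsmul_eq_mul,
        if_neg hab, sub_zero]
  calc ∑ S ∈ t.powersetCard n, (∑ a ∈ S, f a) * ∑ b ∈ t \ S, g b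
      = ∑ a ∈ t, ∑ b ∈ t, ∑ S ∈ t.powersetCard n, if a ∈ S ∧ b ∉ S then f a * g b else 0 := by
        rw [sum_congr rfl hprod, sum_comm, sum_congr rfl fun _ _ => sum_comm]
    _ = ∑ a ∈ t, ∑ b ∈ t,
          (#t - 2).choose (n - 1) * (f a * g b - if a = b then f a * g b else 0) :=
        sum_congr rfl fun a ha => sum_congr rfl (hcount a ha)
    _ = _ := by
        simp only [← mul_sum, sum_sub_distrib, sum_mul_sum, sum_ite_eq, sum_ite_mem, inter_self]

lemma sum_powersetCard_sum_mul_sum_of_sum_eq_zero {R : Type*} [CommRing R] {t : Finset α}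
    (f : α → R) {g : α → R} (hg : ∑ a ∈ t, g a = 0) (hn : 1 ≤ n) :
    ∑ S ∈ t.powersetCard n, (∑ a ∈ S, f a) * ∑ a ∈ S, g a =
      (#t - 2).choose (n - 1) * ∑ a ∈ t, f a * g a := by
  classical
  have hcompl : ∀ S ∈ t.powersetCard n, ∑ a ∈ S, g a = -∑ a ∈ t \ S, g a := fun S hS =>
    eq_neg_of_add_eq_zero_right <| (sum_sdiff (mem_powersetCard.1 hS).1).trans hg
  rw [sum_congr rfl fun S hS => by rw [hcompl S hS, mul_neg], sum_neg_distrib,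
    sum_powersetCard_sum_mul_sum_sdiff t f g hn, hg]
  ring

end Sampling

section CharacterSums

variable {G : Type*} [AddCommGroup G]

/-- The vector `K_S (x, y) = ∑ χ ∈ S, χ (x - y)` attached to a set `S` of characters of `G`; as a
matrix it is a multiple of the orthogonal projection onto the span of `S`. -/
def charKernel (S : Finset (AddChar G ℂ)) : G × G → ℂ :=
  fun p => ∑ χ ∈ S, χ (p.1 - p.2)

lemma charKernel_self (S : Finset (AddChar G ℂ)) (x : G) : charKernel S (x, x) = S.card := by
  simp [charKernel]

lemma rank_toMat_charKernel_le {d : ℕ} [NeZero d] (S : Finset (AddChar (Fin d) ℂ)) :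
    (toMat d (charKernel S)).rank ≤ S.card := by
  have hfactor : toMat d (charKernel S) =
      (of fun i (χ : S) => χ.1 i) * (of fun (χ : S) j => χ.1 (-j)) := by
    ext i j
    simp only [toMat, charKernel, of_apply, mul_apply, ← AddChar.map_add_eq_mul, sub_eq_add_neg]
    exact (Finset.sum_coe_sort S fun χ => χ (i + -j)).symm
  rw [hfactor, ← Fintype.card_coe S]
  exact (rank_mul_le_left _ _).trans (rank_le_card_width _)

lemma sum_powersetCard_charKernel_mul_star [Fintype G] {n : ℕ} (hn : 1 ≤ n) {x y : G}
    (hxy : x ≠ y) :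
    ∑ S ∈ Finset.univ.powersetCard n, charKernel S (x, y) * star (charKernel S (x, y)) =
      (Fintype.card G - 2).choose (n - 1) * Fintype.card G := by
  have hsum : ∑ χ : AddChar G ℂ, star (χ (x - y)) = 0 := by
    rw [← star_sum, AddChar.sum_apply_eq_zero_iff_ne_zero.2 (sub_ne_zero.2 hxy), star_zero]
  have hunit (χ : AddChar G ℂ) : χ (x - y) * star (χ (x - y)) = 1 := by
    rw [RCLike.star_def, ← AddChar.map_neg_eq_conj, ← AddChar.map_add_eq_mul, add_neg_cancel,
      AddChar.map_zero_eq_one]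
  simp only [charKernel, star_sum]
  rw [sum_powersetCard_sum_mul_sum_of_sum_eq_zero _ hsum hn]
  simp only [hunit, Finset.sum_const, Finset.card_univ, AddChar.card_eq, nsmul_eq_mul, mul_one]

end CharacterSums

section MaximallyEntangled

variable {d n : ℕ}

lemma choose_sub_two_sub_one_mul (hd : 2 ≤ d) (hn : 1 ≤ n) :
    (d - 2).choose (n - 1) * (d * (d - 1)) = d.choose n * (n * (d - n)) := by
  obtain ⟨D, rfl⟩ := Nat.exists_eq_add_of_le' hd
  obtain ⟨m, rfl⟩ := Nat.exists_eq_add_of_le' hn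
  have hchoose := Nat.choose_mul_succ_eq D m
  have habsorb := Nat.add_one_mul_choose_eq (D + 1) m
  rw [Nat.add_sub_cancel, Nat.add_sub_cancel, show D + 2 - 1 = D + 1 from rfl,
    show D + 2 - (m + 1) = D + 1 - m by omega]
  calc D.choose m * ((D + 2) * (D + 1)) = (D + 2) * (D.choose m * (D + 1)) := by ring
    _ = (D + 2) * (D + 1).choose m * (D + 1 - m) := by rw [hchoose, mul_assoc]
    _ = (D + 2).choose (m + 1) * ((m + 1) * (D + 1 - m)) := by rw [habsorb, mul_assoc]

lemma cast_choose_sub_two_sub_one_mul (hd : 2 ≤ d) (hn : 1 ≤ n) (hnd : n ≤ d) :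
    ((d - 2).choose (n - 1) * d : ℝ) =
      d.choose n * n ^ 2 * ((d - n) / ((d - 1) * n)) := by
  have hd1 : (d : ℝ) - 1 ≠ 0 := sub_ne_zero.2 (by exact_mod_cast (by omega : d ≠ 1))
  have : (n : ℝ) ≠ 0 := by exact_mod_cast (by omega : n ≠ 0)
  have h : (((d - 2).choose (n - 1) * (d * (d - 1)) : ℕ) : ℝ) =
      (d.choose n * (n * (d - n)) : ℕ) := congrArg _ (choose_sub_two_sub_one_mul hd hn)
  push_cast [Nat.cast_sub hnd, Nat.cast_sub (one_le_two.trans hd)] at h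
  field_simp
  linear_combination h

lemma phaseTwirl_sum_charKernel [NeZero d] (hd : 2 ≤ d) (hn : 1 ≤ n) (hnd : n ≤ d) :
    phaseTwirl (∑ S ∈ (Finset.univ : Finset (AddChar (Fin d) ℂ)).powersetCard n,
        vecMulVec (charKernel S) (star (charKernel S))) =
      (d.choose n * n ^ 2 : ℝ) • (vecMulVec (ketDiag d 1) (star (ketDiag d 1)) +
        (((d : ℝ) - n) / (((d : ℝ) - 1) * n)) • diagonal fun p => if p.1 ≠ p.2 then 1 else 0) := by
  ext ⟨i, j⟩ ⟨k, l⟩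
  simp only [phaseTwirl, of_apply, Matrix.sum_apply, vecMulVec_apply, Pi.star_apply]
  by_cases hdiag : i = j ∧ k = l
  · obtain ⟨rfl, rfl⟩ := hdiag
    have hcard : ∀ S ∈ (Finset.univ : Finset (AddChar (Fin d) ℂ)).powersetCard n,
        charKernel S (i, i) * star (charKernel S (k, k)) = (n : ℂ) ^ 2 := by
      intro S hS
      simp [charKernel_self, (Finset.mem_powersetCard.1 hS).2, sq]
    rw [if_pos (Or.inl ⟨rfl, rfl⟩), Finset.sum_congr rfl hcard]
    simp [ketDiag, vecMulVec_apply, diagonal_apply]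
  · by_cases hpq : (i, j) = (k, l)
    · obtain ⟨rfl, rfl⟩ := Prod.mk.inj hpq
      have hij : i ≠ j := fun h => hdiag ⟨h, h⟩
      have hcoeff := congrArg Complex.ofReal (cast_choose_sub_two_sub_one_mul hd hn hnd)
      push_cast at hcoeff
      rw [if_pos (Or.inr rfl), sum_powersetCard_charKernel_mul_star hn hij]
      simp [ketDiag, vecMulVec_apply, hij, hcoeff]
    · rw [if_neg (not_or.2 ⟨hdiag, hpq⟩)]
      have hket : ketDiag d 1 (i, j) * star (ketDiag d 1 (k, l)) = 0 := by
        by_cases hij : i = j <;> simp_all [ketDiag]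
      rw [Matrix.smul_apply, Matrix.add_apply, vecMulVec_apply, Pi.star_apply, hket,
        Matrix.smul_apply, diagonal_apply_ne _ hpq]
      simp only [smul_zero, add_zero]

lemma SchmidtNumberLE.maximallyEntangled_add_diagonal (hd : 2 ≤ d) (hn : 1 ≤ n) (hnd : n ≤ d) :
    SchmidtNumberLE d (vecMulVec (ketDiag d 1) (star (ketDiag d 1)) +
      (((d : ℝ) - n) / (((d : ℝ) - 1) * n)) • diagonal fun p => if p.1 ≠ p.2 then 1 else 0) n := by
  have : NeZero d := ⟨by omega⟩
  have hsum : SchmidtNumberLE d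
      (∑ S ∈ (Finset.univ : Finset (AddChar (Fin d) ℂ)).powersetCard n,
        vecMulVec (charKernel S) (star (charKernel S))) n :=
    SchmidtNumberLE.sum_s11 fun S hS => SchmidtNumberLE.vecMulVec_star <|
      (rank_toMat_charKernel_le S).trans (Finset.mem_powersetCard.1 hS).2.le
  have hpos : (0 : ℝ) < d.choose n * n ^ 2 := by
    have := Nat.choose_pos hnd
    positivity
  apply SchmidtNumberLE.of_smul hpos
  rw [← phaseTwirl_sum_charKernel hd hn hnd]
  exact hsum.phaseTwirl

end MaximallyEntangled

section LocalFilter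

variable {d : ℕ}

lemma kronecker_diagonal_mulVec_ketDiag_one (b c : Fin d → ℝ) :
    (diagonal (fun i => (b i : ℂ)) ⊗ₖ diagonal (fun i => (c i : ℂ))) *ᵥ ketDiag d 1 =
      ketDiag d (b * c) := by
  ext ⟨i, j⟩
  rw [diagonal_kronecker_diagonal, mulVec_diagonal]
  by_cases hij : i = j <;> simp [ketDiag, hij]

lemma kronecker_diagonal_conj_diagonal (b c : Fin d → ℝ) (f : Fin d × Fin d → ℂ) :
    (diagonal (fun i => (b i : ℂ)) ⊗ₖ diagonal (fun i => (c i : ℂ))) * diagonal f *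
        (diagonal (fun i => (b i : ℂ)) ⊗ₖ diagonal (fun i => (c i : ℂ)))ᴴ =
      diagonal fun p => (((b p.1 * c p.2) ^ 2 : ℝ) : ℂ) * f p := by
  rw [diagonal_kronecker_diagonal, diagonal_conjTranspose, diagonal_mul_diagonal,
    diagonal_mul_diagonal]
  congr 1 with p
  simp only [Pi.star_apply, RCLike.star_def, map_mul, Complex.conj_ofReal]
  push_cast
  ring

lemma sign_mul_sqrt_abs_mul_sqrt_abs (x : ℝ) : SignType.sign x * √|x| * √|x| = x := by
  rw [mul_assoc, Real.mul_self_sqrt (abs_nonneg x), sign_mul_abs]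

lemma sq_sign_mul_sqrt_abs (x : ℝ) : (SignType.sign x * √|x|) ^ 2 = |x| := by
  rw [mul_pow, Real.sq_sqrt (abs_nonneg x), sq, mul_assoc, sign_mul_abs, sign_mul_self]

end LocalFilter

theorem upper_bound_generalised_schmidt_robustness_general (d n : ℕ) (hd : 2 ≤ d) (hn : 1 ≤ n)
    (hnd : n ≤ d) (a : Fin d → ℝ) :
    SchmidtNumberLE d
      (Matrix.vecMulVec (ketDiag d a) (star (ketDiag d a)) +
        (((d : ℝ) - n) / (((d : ℝ) - 1) * n)) •
          Matrix.diagonal (fun p : Fin d × Fin d =>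
            if p.1 ≠ p.2 then ((|a p.1 * a p.2| : ℝ) : ℂ) else 0)) n := by
  let b : Fin d → ℝ := fun i => SignType.sign (a i) * √|a i|
  let c : Fin d → ℝ := fun i => √|a i|
  have hbc : b * c = a := funext fun i => sign_mul_sqrt_abs_mul_sqrt_abs (a i)
  have hsq (i j : Fin d) : (b i * c j) ^ 2 = |a i * a j| := by
    rw [mul_pow, sq_sign_mul_sqrt_abs, Real.sq_sqrt (abs_nonneg _), abs_mul]
  have h := (SchmidtNumberLE.maximallyEntangled_add_diagonal hd hn hnd).kronecker_conj
    (diagonal fun i => (b i : ℂ)) (diagonal fun i => (c i : ℂ))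
  simpa only [Matrix.mul_add, Matrix.add_mul, mul_vecMulVec, vecMulVec_mul, ← star_mulVec,
    Matrix.mul_smul, Matrix.smul_mul, kronecker_diagonal_mulVec_ketDiag_one,
    kronecker_diagonal_conj_diagonal, hbc, hsq, mul_ite, mul_one, mul_zero] using h

/-- Upper bound on the generalised Schmidt robustness of a pure state. -/
theorem upper_bound_generalised_schmidt_robustness (d n : ℕ) (hd : 2 ≤ d) (hn : 1 ≤ n)
    (hnd : n < d) (a : Fin d → ℝ) (ha : ∀ i, 0 ≤ a i) (hnorm : ∑ i, a i ^ 2 = 1) :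
    SchmidtNumberLE d
      (Matrix.vecMulVec (ketDiag d a) (star (ketDiag d a)) +
        (((d : ℝ) - n) / (((d : ℝ) - 1) * n)) •
          Matrix.diagonal (fun p : Fin d × Fin d =>
            if p.1 ≠ p.2 then ((a p.1 * a p.2 : ℝ) : ℂ) else 0)) n := by
  have h := upper_bound_generalised_schmidt_robustness_general d n hd hn hnd.le a
  simpa only [abs_of_nonneg (mul_nonneg (ha _) (ha _))] using h
end

section
/- Lower bound for the generalised Schmidt robustness of a pure state: let d ≥ 2, 1 ≤ n < d, and let ψ = Σ_i a_i |ii⟩ be a unit vector with a_i ≥ 0 and Σ_i a_i² = 1. Let σ be any positive semidefinite matrix on ℂ^d ⊗ ℂ^d with Tr σ = 1 and let t ≥ 0. If ψψ† + t·σ has Schmidt number at most n, then t ≥ (1/n)(Σ_i a_i)² − 1. -/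
open Matrix BigOperators Kronecker ComplexOrder

/-!
The Schmidt number is witnessed by the unnormalised maximally entangled vector `φ = Σ_i |ii⟩`:
`⟨φ, v⟩ = Tr M_v`, and `|Tr M| ^ 2 ≤ rank M * ‖M‖_F ^ 2`, so every `ρ` of Schmidt number at most
`n` satisfies `⟨φ, ρ φ⟩ ≤ n * Tr ρ`. For `ρ = ψψᴴ + tσ` the left side is at least `(Σ_i a_i) ^ 2`
because `σ` is positive semidefinite, and `Tr ρ = 1 + t`.

The rank enters because the trace of `M` can be taken over an orthonormal basis of its range, which
leaves only `rank M` terms for Cauchy–Schwarz; Bessel's inequality then recovers `‖M‖_F`.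
-/

section TraceRank

variable {𝕜 ι : Type*} [RCLike 𝕜] [Fintype ι]

theorem norm_trace_sq_le_finrank_range_mul_sum {E : Type*} [NormedAddCommGroup E]
    [InnerProductSpace 𝕜 E] (T : E →ₗ[𝕜] E) (e : OrthonormalBasis ι 𝕜 E) :
    ‖LinearMap.trace 𝕜 E T‖ ^ 2 ≤ Module.finrank 𝕜 T.range * ∑ j, ‖T (e j)‖ ^ 2 := by
  classical
  have : FiniteDimensional 𝕜 E := e.toBasis.finiteDimensional_of_finite
  let b := stdOrthonormalBasis 𝕜 T.range
  have hb : Orthonormal 𝕜 fun l => (b l : E) := b.orthonormal.comp_linearIsometry T.range.subtypeₗᵢ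
  have trace_eq : LinearMap.trace 𝕜 E T = ∑ l, inner 𝕜 (b l : E) (T (b l)) := by
    rw [← LinearMap.trace_restrict_eq_of_forall_mem T.range T fun x => ⟨x, rfl⟩,
      LinearMap.trace_eq_sum_inner _ b]
    rfl
  have norm_inner_le (l) : ‖inner 𝕜 (b l : E) (T (b l))‖ ≤ ‖T.adjoint (b l)‖ := by
    rw [← LinearMap.adjoint_inner_left]
    simpa only [hb.norm_eq_one l, mul_one] using
      norm_inner_le_norm (𝕜 := 𝕜) (T.adjoint (b l)) (b l : E)
  have sum_adjoint_le : ∑ l, ‖T.adjoint (b l)‖ ^ 2 ≤ ∑ j, ‖T (e j)‖ ^ 2 := by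
    calc ∑ l, ‖T.adjoint (b l)‖ ^ 2
        = ∑ j, ∑ l, ‖inner 𝕜 (b l : E) (T (e j))‖ ^ 2 := by
          simp only [← e.sum_sq_norm_inner_left (T.adjoint _), LinearMap.adjoint_inner_left]
          exact Finset.sum_comm
      _ ≤ ∑ j, ‖T (e j)‖ ^ 2 := Finset.sum_le_sum fun _ _ => hb.sum_inner_products_le _
  calc ‖LinearMap.trace 𝕜 E T‖ ^ 2
      ≤ (∑ l, ‖T.adjoint (b l)‖) ^ 2 := by
        rw [trace_eq]
        gcongr
        exact norm_sum_le_of_le _ fun l _ => norm_inner_le l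
    _ ≤ Module.finrank 𝕜 T.range * ∑ l, ‖T.adjoint (b l)‖ ^ 2 := by
        simpa using sq_sum_le_card_mul_sum_sq (s := Finset.univ) (f := fun l => ‖T.adjoint (b l)‖)
    _ ≤ Module.finrank 𝕜 T.range * ∑ j, ‖T (e j)‖ ^ 2 := by gcongr

theorem norm_trace_sq_le_rank_mul_sum (M : Matrix ι ι 𝕜) :
    ‖M.trace‖ ^ 2 ≤ M.rank * ∑ i, ∑ j, ‖M i j‖ ^ 2 := by
  classical
  let e := EuclideanSpace.basisFun ι 𝕜
  have h := norm_trace_sq_le_finrank_range_mul_sum (Matrix.toLin e.toBasis e.toBasis M) e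
  rw [Matrix.trace_toLin_eq, ← Matrix.rank_eq_finrank_range_toLin,
    ← Matrix.toEuclideanLin_eq_toLin_orthonormal] at h
  rw [Finset.sum_comm]
  simpa [e, EuclideanSpace.norm_sq_eq] using h

theorem trace_vecMulVec_star (v : ι → 𝕜) :
    (vecMulVec v (star v)).trace = ((∑ i, ‖v i‖ ^ 2 : ℝ) : 𝕜) := by
  simp [trace_vecMulVec, dotProduct, RCLike.mul_conj]

theorem star_dotProduct_vecMulVec_star_mulVec (x v : ι → 𝕜) :
    star x ⬝ᵥ vecMulVec v (star v) *ᵥ x = ((‖star x ⬝ᵥ v‖ ^ 2 : ℝ) : 𝕜) := by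
  rw [vecMulVec_mulVec, dotProduct_smul, op_smul_eq_mul, star_dotProduct v x]
  simp [RCLike.mul_conj]

end TraceRank

theorem norm_trace_toMat_ketDiag {d : ℕ} (a : Fin d → ℝ) :
    ‖(toMat d (ketDiag d a)).trace‖ = |∑ i, a i| := by
  simp [Matrix.trace, toMat, ketDiag, ← Complex.ofReal_sum]

theorem sum_norm_sq_ketDiag {d : ℕ} (a : Fin d → ℝ) :
    ∑ p, ‖ketDiag d a p‖ ^ 2 = ∑ i, a i ^ 2 := by
  simp [Fintype.sum_prod_type, ketDiag, apply_ite]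

theorem star_ketDiag_one_dotProduct {d : ℕ} (v : Fin d × Fin d → ℂ) :
    star (ketDiag d 1) ⬝ᵥ v = (toMat d v).trace := by
  simp [ketDiag, toMat, dotProduct, Fintype.sum_prod_type, Matrix.trace, apply_ite]

theorem SchmidtNumberLE.ketDiag_one_expectation_le {d n : ℕ}
    {ρ : Matrix (Fin d × Fin d) (Fin d × Fin d) ℂ} (hρ : SchmidtNumberLE d ρ n) :
    star (ketDiag d 1) ⬝ᵥ ρ *ᵥ ketDiag d 1 ≤ n * ρ.trace := by
  obtain ⟨k, w, hw, rfl⟩ := hρ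
  have trace_sq_le (l) : ‖(toMat d (w l)).trace‖ ^ 2 ≤ n * ∑ p, ‖w l p‖ ^ 2 :=
    calc ‖(toMat d (w l)).trace‖ ^ 2
        ≤ (toMat d (w l)).rank * ∑ p, ‖w l p‖ ^ 2 := by
          rw [Fintype.sum_prod_type]
          exact norm_trace_sq_le_rank_mul_sum (toMat d (w l))
      _ ≤ n * ∑ p, ‖w l p‖ ^ 2 := by gcongr; exact hw l
  simp only [sum_mulVec, dotProduct_sum, trace_sum, Finset.mul_sum, trace_vecMulVec_star,
    star_dotProduct_vecMulVec_star_mulVec, star_ketDiag_one_dotProduct,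
    RCLike.ofReal_eq_complex_ofReal]
  exact Finset.sum_le_sum fun l _ => by exact_mod_cast trace_sq_le l

theorem lower_bound_generalised_schmidt_robustness_general {d n : ℕ} (v : Fin d × Fin d → ℂ)
    {σ : Matrix (Fin d × Fin d) (Fin d × Fin d) ℂ} (hσ : σ.PosSemidef)
    (h : SchmidtNumberLE d (vecMulVec v (star v) + σ) n) :
    ‖(toMat d v).trace‖ ^ 2 ≤ n * (∑ p, ‖v p‖ ^ 2 + σ.trace.re) := by
  have expectation_le := h.ketDiag_one_expectation_le
  rw [add_mulVec, dotProduct_add, star_dotProduct_vecMulVec_star_mulVec,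
    star_ketDiag_one_dotProduct, trace_add, trace_vecMulVec_star,
    RCLike.ofReal_eq_complex_ofReal] at expectation_le
  have le_expectation := le_add_of_nonneg_right (a := ((‖(toMat d v).trace‖ ^ 2 : ℝ) : ℂ))
    (hσ.dotProduct_mulVec_nonneg (ketDiag d 1))
  simpa only [Complex.re_ofReal_mul, Complex.add_re, Complex.ofReal_re, ← Complex.ofReal_natCast]
    using (Complex.le_def.mp (le_expectation.trans expectation_le)).1

/-- Lower bound for the generalised Schmidt robustness of a pure state. -/
theorem lower_bound_generalised_schmidt_robustness (d n : ℕ) (hd : 2 ≤ d) (hn : 1 ≤ n)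
    (hnd : n < d) (a : Fin d → ℝ) (ha : ∀ i, 0 ≤ a i) (hnorm : ∑ i, a i ^ 2 = 1)
    (σ : Matrix (Fin d × Fin d) (Fin d × Fin d) ℂ) (hσ : σ.PosSemidef) (htr : σ.trace = 1)
    (t : ℝ) (ht : 0 ≤ t)
    (h : SchmidtNumberLE d
      (Matrix.vecMulVec (ketDiag d a) (star (ketDiag d a)) + t • σ) n) :
    (1 / (n : ℝ)) * (∑ i, a i) ^ 2 - 1 ≤ t := by
  rw [one_div, sub_le_iff_le_add', inv_mul_le_iff₀ (by exact_mod_cast hn)]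
  simpa [norm_trace_toMat_ketDiag, sum_norm_sq_ketDiag, hnorm, htr] using
    lower_bound_generalised_schmidt_robustness_general (ketDiag d a) (hσ.smul ht) h
end
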